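/- arXiv:1303.5265 — 16 statements merged into one kernel-verified Lean document; each statement's English description precedes it below -/
import Mathlib

section
/- Let C be a symmetric monoidal category and let R be an object of C. Then R admits the structure of a solid monoid (i.e., a monoid structure (R, μ, η) whose multiplication μ : R ⊗ R → R is an isomorphism) if and only if there exists a morphism η : 𝟙_C → R such that both whiskered morphisms η ▷ R : 𝟙_C ⊗ R → R ⊗ R and R ◁ η : R ⊗ 𝟙_C → R ⊗ R are isomorphisms. -/
/-!
If `μ` is invertible, the unit laws exhibit `η ▷ R` and `R ◁ η` as composites of isomorphisms.

Conversely, suppose both whiskerings of `η` are invertible. An endomorphism `g` of `R` with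
`η ≫ g = η` is the identity: `R ◁ g` is the identity because `R ◁ η` is epi, and the isomorphism
`(λ_ R).inv ≫ η ▷ R : R ⟶ R ⊗ R` intertwines `g` with `R ◁ g` (`eq_id_of_unit_comp`). The two
isomorphisms `R ⟶ R ⊗ R` built from `η ▷ R` and `R ◁ η` agree after precomposition with `η`, hence
they are equal, and their common inverse `μ` satisfies both unit laws. Associativity may be tested
after precomposition with the isomorphism `(R ◁ η) ▷ R`, where it reduces to the triangle identity.
-/

open CategoryTheory MonoidalCategory

/-- If `η ▷ R` and `R ◁ η` are isomorphisms, endomorphisms of `R` fixing `η` are trivial. -/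
lemma eq_id_of_unit_comp {C : Type*} [Category C] [MonoidalCategory C] {R : C}
    (η : 𝟙_ C ⟶ R) [IsIso (η ▷ R)] [IsIso (R ◁ η)] (g : R ⟶ R) (hg : η ≫ g = η) : g = 𝟙 R := by
  have h : R ◁ g = 𝟙 (R ⊗ R) := by
    rw [← cancel_epi (R ◁ η), ← whiskerLeft_comp, hg, Category.comp_id]
  have h' : g ≫ (λ_ R).inv ≫ η ▷ R = (λ_ R).inv ≫ η ▷ R ≫ R ◁ g := by
    rw [← whisker_exchange, leftUnitor_inv_naturality_assoc]
  rw [← cancel_mono ((λ_ R).inv ≫ η ▷ R), h', h, Category.comp_id, Category.id_comp]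

/-- An object `R` of a symmetric monoidal category admits the structure of a solid monoid
(a monoid whose multiplication is an isomorphism) if and only if there is a morphism
`η : 𝟙_ C ⟶ R` such that `η ▷ R` and `R ◁ η` are isomorphisms. -/
theorem solid_monoid_iff_whisker_iso {C : Type*} [Category C] [MonoidalCategory C]
    [SymmetricCategory C] (R : C) :
    (∃ (μ : R ⊗ R ⟶ R) (η : 𝟙_ C ⟶ R),
        (η ▷ R) ≫ μ = (λ_ R).hom ∧
        (R ◁ η) ≫ μ = (ρ_ R).hom ∧
        (μ ▷ R) ≫ μ = (α_ R R R).hom ≫ (R ◁ μ) ≫ μ ∧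
        IsIso μ) ↔
      (∃ η : 𝟙_ C ⟶ R, IsIso (η ▷ R) ∧ IsIso (R ◁ η)) := by
  constructor
  · rintro ⟨μ, η, hl, hr, -, hμ⟩
    refine ⟨η, ?_, ?_⟩
    · rw [← IsIso.eq_comp_inv] at hl
      rw [hl]
      infer_instance
    · rw [← IsIso.eq_comp_inv] at hr
      rw [hr]
      infer_instance
  · rintro ⟨η, h₁, h₂⟩
    have hη : η ≫ (ρ_ R).inv ≫ R ◁ η = η ≫ (λ_ R).inv ≫ η ▷ R := by
      rw [rightUnitor_inv_naturality_assoc, leftUnitor_inv_naturality_assoc, ← whisker_exchange,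
        unitors_inv_equal]
    have hab : (ρ_ R).inv ≫ R ◁ η = (λ_ R).inv ≫ η ▷ R := by
      have := eq_id_of_unit_comp η (((ρ_ R).inv ≫ R ◁ η) ≫ inv ((λ_ R).inv ≫ η ▷ R)) (by
        rw [← Category.assoc, hη, Category.assoc, IsIso.hom_inv_id, Category.comp_id])
      rwa [IsIso.comp_inv_eq, Category.id_comp] at this
    have hl : η ▷ R ≫ inv ((λ_ R).inv ≫ η ▷ R) = (λ_ R).hom := by
      rw [IsIso.comp_inv_eq, Iso.hom_inv_id_assoc]
    have hr : R ◁ η ≫ inv ((λ_ R).inv ≫ η ▷ R) = (ρ_ R).hom := by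
      rw [IsIso.comp_inv_eq, ← hab, Iso.hom_inv_id_assoc]
    refine ⟨inv ((λ_ R).inv ≫ η ▷ R), η, hl, hr, ?_, inferInstance⟩
    generalize inv ((λ_ R).inv ≫ η ▷ R) = μ at hl hr
    rw [← cancel_epi ((R ◁ η) ▷ R), ← comp_whiskerRight_assoc, hr,
      associator_naturality_middle_assoc, ← whiskerLeft_comp_assoc, hl, triangle_assoc]
end

section
/- Let C be a symmetric monoidal category, R an object of C, and η : 𝟙_C → R a morphism such that η ▷ R : 𝟙_C ⊗ R → R ⊗ R and R ◁ η : R ⊗ 𝟙_C → R ⊗ R are isomorphisms. If f : R → R is any morphism with η ≫ f = η, then f = 𝟙_R. -/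
open CategoryTheory MonoidalCategory

/-- If `η : 𝟙_ C ⟶ R` is such that `η ▷ R` and `R ◁ η` are isomorphisms, then any
endomorphism `f : R ⟶ R` with `η ≫ f = η` is the identity. -/
theorem eq_id_of_unit_comp_eq_unit {C : Type*} [Category C] [MonoidalCategory C]
    [SymmetricCategory C] (R : C) (η : 𝟙_ C ⟶ R)
    (h₁ : IsIso (η ▷ R)) (h₂ : IsIso (R ◁ η))
    (f : R ⟶ R) (hf : η ≫ f = η) : f = 𝟙 R := by
  -- `R ◁ η` is epi, so the hypothesis on `f` whiskers to `R ◁ f = 𝟙`.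
  have hR : R ◁ f = 𝟙 (R ⊗ R) := by
    rw [← cancel_epi (R ◁ η), ← whiskerLeft_comp, hf, Category.comp_id]
  -- The interchange law moves `f` across `η ▷ R`, which is mono.
  have hI : 𝟙_ C ◁ f = 𝟙_ C ◁ 𝟙 R := by
    rw [← cancel_mono (η ▷ R), whisker_exchange, hR, Category.comp_id, whiskerLeft_id,
      Category.id_comp]
  exact (whiskerLeft_iff f (𝟙 R)).mp hI
end

section
/- Let C be a symmetric monoidal category, R an object of C, and η : 𝟙_C → R a morphism such that η ▷ R and R ◁ η are isomorphisms. Then there exists a unique morphism μ : R ⊗ R → R such that (η ▷ R) ≫ μ equals the left unitor of R and (R ◁ η) ≫ μ equals the right unitor of R; moreover this μ is an isomorphism and (R, μ, η) is a monoid in C. -/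
/-!
The maps `l = (λ_ R).inv ≫ η ▷ R` and `r = (ρ_ R).inv ≫ R ◁ η` from `R` to `R ⊗ R` agree after
precomposition with `η`, by the interchange law. Since `R ◁ η` is an isomorphism, a morphism from
`R` to an object `Y` with `η ▷ Y` monic is determined by its restriction along `η`
(`hom_ext_of_unit`), which applies to `Y = R ⊗ R`. Hence `l = r`, and `μ` is
the inverse of this common map. Uniqueness and associativity follow by cancelling the
isomorphisms `η ▷ R` and `η ▷ R ▷ R`.
-/

open CategoryTheory MonoidalCategory

/-- Morphisms from `R` to an object `Y` with `η ▷ Y` monic are determined by their restriction along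
`η`. -/
theorem hom_ext_of_unit {C : Type*} [Category C] [MonoidalCategory C] {R Y : C} (η : 𝟙_ C ⟶ R)
    [IsIso (R ◁ η)] [Mono (η ▷ Y)] {f g : R ⟶ Y} (h : η ≫ f = η ≫ g) : f = g := by
  have hR : R ◁ f = R ◁ g := by
    rw [← cancel_epi (R ◁ η), ← whiskerLeft_comp, ← whiskerLeft_comp, h]
  have hI : 𝟙_ C ◁ f = 𝟙_ C ◁ g := by
    rw [← cancel_mono (η ▷ Y), whisker_exchange, whisker_exchange, hR]
  simpa using hI

/-- The two unit insertions `R ⟶ R ⊗ R` coincide. -/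
theorem unit_insertions_eq {C : Type*} [Category C] [MonoidalCategory C] {R : C} (η : 𝟙_ C ⟶ R)
    [IsIso (η ▷ R)] [IsIso (R ◁ η)] : (λ_ R).inv ≫ η ▷ R = (ρ_ R).inv ≫ R ◁ η := by
  have : IsIso (η ▷ (R ⊗ R)) := by
    rw [whiskerRight_tensor]
    infer_instance
  apply hom_ext_of_unit η
  rw [leftUnitor_inv_naturality_assoc, rightUnitor_inv_naturality_assoc, whisker_exchange,
    unitors_inv_equal]

/-- If `η : 𝟙_ C ⟶ R` is such that `η ▷ R` and `R ◁ η` are isomorphisms, then there is a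
unique morphism `μ : R ⊗ R ⟶ R` compatible with the unitors; moreover this `μ` is an
isomorphism and `(R, μ, η)` is a monoid. -/
theorem exists_unique_solid_mul {C : Type*} [Category C] [MonoidalCategory C]
    [SymmetricCategory C] (R : C) (η : 𝟙_ C ⟶ R)
    (h₁ : IsIso (η ▷ R)) (h₂ : IsIso (R ◁ η)) :
    (∃! μ : R ⊗ R ⟶ R, (η ▷ R) ≫ μ = (λ_ R).hom ∧ (R ◁ η) ≫ μ = (ρ_ R).hom) ∧
      ∀ μ : R ⊗ R ⟶ R, (η ▷ R) ≫ μ = (λ_ R).hom → (R ◁ η) ≫ μ = (ρ_ R).hom →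
        IsIso μ ∧ (μ ▷ R) ≫ μ = (α_ R R R).hom ≫ (R ◁ μ) ≫ μ := by
  refine ⟨⟨inv (η ▷ R) ≫ (λ_ R).hom, ⟨by simp, ?_⟩, ?_⟩, ?_⟩
  · have h : R ◁ η = (ρ_ R).hom ≫ (λ_ R).inv ≫ η ▷ R := by
      rw [unit_insertions_eq, Iso.hom_inv_id_assoc]
    rw [h]
    simp
  · rintro μ ⟨hμ, -⟩
    rw [← hμ, IsIso.inv_hom_id_assoc]
  · intro μ hl hr
    refine ⟨?_, ?_⟩
    · have : IsIso (η ▷ R ≫ μ) := by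
        rw [hl]
        infer_instance
      exact IsIso.of_isIso_comp_left (η ▷ R) μ
    · -- Both sides restrict along `η ▷ R ▷ R` to `(λ_ R).hom ▷ R ≫ μ`.
      rw [← cancel_epi (η ▷ R ▷ R), ← comp_whiskerRight_assoc, hl,
        associator_naturality_left_assoc, ← whisker_exchange_assoc, hl, leftUnitor_naturality]
      simp
end

section
/- Let C be a symmetric monoidal category and (R, μ, η) a solid monoid in C. Define L : C ⥤ C to be the functor X ↦ X ⊗ R, and define l : 𝟭 C ⟶ L by l_X = ρ_X⁻¹ ≫ (X ◁ η) : X → X ⊗ R, where ρ is the right unitor. Then (L, l) is a localization functor: l is a natural transformation satisfying l_{L X} = L(l_X) and l_{L X} is an isomorphism for every object X. -/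
open CategoryTheory MonoidalCategory

/-!
The morphism `(α_ X R R).hom ≫ X ◁ μ : (X ⊗ R) ⊗ R ⟶ X ⊗ R` is an isomorphism because `μ` is.
By the right unit law `l_{L X}` is a section of it, and by the left unit law so is `L (l_X)`.
A section of an isomorphism is its inverse, so the two agree and are isomorphisms.
-/

/-- If `(R, μ, η)` is a solid monoid, then tensoring on the right with `R`, together with the
natural transformation with components `(ρ_ X).inv ≫ (X ◁ η)`, is a localization functor. -/
theorem solid_monoid_gives_smashing_localization {C : Type*} [Category C] [MonoidalCategory C]
    [SymmetricCategory C] (R : C) (μ : R ⊗ R ⟶ R) (η : 𝟙_ C ⟶ R)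
    (h_one_mul : (η ▷ R) ≫ μ = (λ_ R).hom)
    (h_mul_one : (R ◁ η) ≫ μ = (ρ_ R).hom)
    (h_assoc : (μ ▷ R) ≫ μ = (α_ R R R).hom ≫ (R ◁ μ) ≫ μ)
    (h_solid : IsIso μ) :
    ∃ l : 𝟭 C ⟶ tensorRight R,
      (∀ X : C, l.app X = (ρ_ X).inv ≫ (X ◁ η)) ∧
      (∀ X : C, l.app ((tensorRight R).obj X) = (tensorRight R).map (l.app X)) ∧
      (∀ X : C, IsIso (l.app ((tensorRight R).obj X))) := by
  have h_right (X : C) : ((ρ_ (X ⊗ R)).inv ≫ ((X ⊗ R) ◁ η)) ≫ (α_ X R R).hom ≫ X ◁ μ =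
      𝟙 (X ⊗ R) := by
    rw [Category.assoc, tensor_whiskerLeft_assoc]
    simp [← whiskerLeft_comp, h_mul_one]
  have h_left (X : C) : (((ρ_ X).inv ≫ (X ◁ η)) ▷ R) ≫ (α_ X R R).hom ≫ X ◁ μ =
      𝟙 (X ⊗ R) := by
    rw [comp_whiskerRight, Category.assoc, whisker_assoc_assoc]
    simp [← whiskerLeft_comp, h_one_mul]
  refine ⟨{ app := fun X => (ρ_ X).inv ≫ (X ◁ η)
            naturality := fun X Y f => ?_ }, fun X => rfl, fun X => ?_, fun X => ?_⟩
  · simp [whisker_exchange]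
  · exact (cancel_mono ((α_ X R R).hom ≫ X ◁ μ)).1 ((h_right X).trans (h_left X).symm)
  · have : IsIso (((ρ_ (X ⊗ R)).inv ≫ ((X ⊗ R) ◁ η)) ≫ (α_ X R R).hom ≫ X ◁ μ) := by
      rw [h_right]; infer_instance
    exact IsIso.of_isIso_comp_right ((ρ_ (X ⊗ R)).inv ≫ ((X ⊗ R) ◁ η))
      ((α_ X R R).hom ≫ X ◁ μ)
end

section
/- Let C be a symmetric monoidal category and let (L, l) be a localization functor on C which is smashing, i.e., there exists an object A of C and a natural isomorphism L ≅ (tensoring on the right with A). Then the object L(𝟙_C) admits the structure of a solid monoid, i.e., a monoid structure whose multiplication is an isomorphism. -/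
/-!
Write `R = L 𝟙` and `η = l_𝟙 : 𝟙 ⟶ R`. Since `L η = l_{L 𝟙}` is invertible and `L` is tensoring with
`A ≅ R`, the map `η ▷ R` is invertible. The object `R ⊗ R` is isomorphic to `L R`,
hence local, and `η` is inverted by `L`, so two maps `R ⟶ R ⊗ R` which agree
after precomposition with `η` are equal (`eq_of_precomp_of_local`). Therefore `η ▷ R` and `R ◁ η`
agree up to unitors, and their common inverse, up to unitors, is a two-sided unital multiplication
`μ`, invertible by construction. Associativity can be tested after precomposition with the isomorphism `η ▷ R ▷ R`,
where it follows from the unit law.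

Note that `l` is not assumed compatible with the tensor product (`l_X` need not be `X ◁ l_𝟙` under
the identification of `L`), so the comparison of `η ▷ R` and `R ◁ η` relies on locality.
-/

open CategoryTheory MonoidalCategory

/-- Maps into a local object (one where `l` is invertible) are determined by their precomposition
with a map inverted by `L`. -/
lemma eq_of_precomp_of_local {C : Type*} [Category C] {L : C ⥤ C} (l : 𝟭 C ⟶ L)
    {X Y Z : C} (f : X ⟶ Y) [IsIso (L.map f)] [IsIso (l.app Z)] {g h : Y ⟶ Z}
    (w : f ≫ g = f ≫ h) : g = h := by
  have hL : L.map g = L.map h := by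
    rw [← cancel_epi (L.map f), ← L.map_comp, ← L.map_comp, w]
  have hg := l.naturality g
  have hh := l.naturality h
  rw [hL, ← hh] at hg
  exact (cancel_mono (l.app Z)).1 hg

/-- Local objects are closed under isomorphism. -/
lemma isIso_app_of_iso {C : Type*} [Category C] {L : C ⥤ C} (l : 𝟭 C ⟶ L)
    {X Y : C} (i : X ≅ Y) [IsIso (l.app X)] : IsIso (l.app Y) := by
  have h : l.app Y = i.inv ≫ l.app X ≫ L.map i.hom := by
    rw [← l.naturality i.hom]
    simp
  rw [h]
  infer_instance

lemma isIso_whiskerRight_of_iso {C : Type*} [Category C] [MonoidalCategory C] {X Y A B : C}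
    (f : X ⟶ Y) (i : A ≅ B) [IsIso (f ▷ A)] : IsIso (f ▷ B) := by
  have h : f ▷ B = X ◁ i.inv ≫ f ▷ A ≫ Y ◁ i.hom := by
    rw [← whisker_exchange, ← MonoidalCategory.whiskerLeft_comp_assoc]
    simp
  rw [h]
  infer_instance

/-- An object `R` with a map `η` from the unit such that `η ▷ R` is invertible and agrees with
`R ◁ η` up to unitors is a solid monoid. -/
lemma solid_of_whiskerRight_eq {C : Type*} [Category C] [MonoidalCategory C] {R : C}
    (η : 𝟙_ C ⟶ R) [IsIso (η ▷ R)] (h : (λ_ R).inv ≫ η ▷ R = (ρ_ R).inv ≫ R ◁ η) :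
    ∃ (μ : R ⊗ R ⟶ R) (η : 𝟙_ C ⟶ R),
      (η ▷ R) ≫ μ = (λ_ R).hom ∧ (R ◁ η) ≫ μ = (ρ_ R).hom ∧
      (μ ▷ R) ≫ μ = (α_ R R R).hom ≫ (R ◁ μ) ≫ μ ∧ IsIso μ := by
  obtain ⟨μ, hμ, hl⟩ : ∃ μ : R ⊗ R ⟶ R, IsIso μ ∧ η ▷ R ≫ μ = (λ_ R).hom :=
    ⟨inv (η ▷ R) ≫ (λ_ R).hom, inferInstance, by simp⟩
  refine ⟨μ, η, hl, ?_, ?_, hμ⟩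
  · have h' : R ◁ η = (ρ_ R).hom ≫ (λ_ R).inv ≫ η ▷ R := by simp [h]
    rw [h', Category.assoc, Category.assoc, hl]
    simp
  · rw [← cancel_epi (η ▷ R ▷ R)]
    calc η ▷ R ▷ R ≫ μ ▷ R ≫ μ = (λ_ R).hom ▷ R ≫ μ := by
          rw [← comp_whiskerRight_assoc, hl]
      _ = (α_ (𝟙_ C) R R).hom ≫ 𝟙_ C ◁ μ ≫ (λ_ R).hom := by simp
      _ = (α_ (𝟙_ C) R R).hom ≫ 𝟙_ C ◁ μ ≫ η ▷ R ≫ μ := by rw [hl]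
      _ = η ▷ R ▷ R ≫ (α_ R R R).hom ≫ R ◁ μ ≫ μ := by
          rw [whisker_exchange_assoc, whiskerRight_tensor]
          simp

/-- If `(L, l)` is a smashing localization functor, then `L (𝟙_ C)` admits the structure of a
solid monoid. -/
theorem smashing_localization_unit_solid {C : Type*} [Category C] [MonoidalCategory C]
    [SymmetricCategory C] (L : C ⥤ C) (l : 𝟭 C ⟶ L)
    (h_idem : ∀ X : C, l.app (L.obj X) = L.map (l.app X))
    (h_iso : ∀ X : C, IsIso (l.app (L.obj X)))
    (A : C) (e : L ≅ tensorRight A) :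
    ∃ (μ : L.obj (𝟙_ C) ⊗ L.obj (𝟙_ C) ⟶ L.obj (𝟙_ C)) (η : 𝟙_ C ⟶ L.obj (𝟙_ C)),
      (η ▷ L.obj (𝟙_ C)) ≫ μ = (λ_ (L.obj (𝟙_ C))).hom ∧
      (L.obj (𝟙_ C) ◁ η) ≫ μ = (ρ_ (L.obj (𝟙_ C))).hom ∧
      (μ ▷ L.obj (𝟙_ C)) ≫ μ =
        (α_ (L.obj (𝟙_ C)) (L.obj (𝟙_ C)) (L.obj (𝟙_ C))).hom ≫ (L.obj (𝟙_ C) ◁ μ) ≫ μ ∧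
      IsIso μ := by
  have hLη : IsIso (L.map (l.app (𝟙_ C))) := h_idem (𝟙_ C) ▸ h_iso (𝟙_ C)
  let i : A ≅ L.obj (𝟙_ C) := (λ_ A).symm ≪≫ (e.app (𝟙_ C)).symm
  have hηA : IsIso (l.app (𝟙_ C) ▷ A) :=
    (NatIso.isIso_map_iff e (l.app (𝟙_ C))).1 hLη
  have hηR : IsIso (l.app (𝟙_ C) ▷ L.obj (𝟙_ C)) :=
    isIso_whiskerRight_of_iso (l.app (𝟙_ C)) i
  have hloc : IsIso (l.app (L.obj (𝟙_ C) ⊗ L.obj (𝟙_ C))) :=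
    have := h_iso (L.obj (𝟙_ C))
    isIso_app_of_iso l (e.app (L.obj (𝟙_ C)) ≪≫ whiskerLeftIso (L.obj (𝟙_ C)) i)
  -- Both composites with `η` are `η ⊗ η` up to the unitor of `𝟙 ⊗ 𝟙`.
  have key (η : 𝟙_ C ⟶ L.obj (𝟙_ C)) :
      η ≫ (λ_ (L.obj (𝟙_ C))).inv ≫ η ▷ L.obj (𝟙_ C) =
        η ≫ (ρ_ (L.obj (𝟙_ C))).inv ≫ L.obj (𝟙_ C) ◁ η := by
    rw [leftUnitor_inv_naturality_assoc, rightUnitor_inv_naturality_assoc, whisker_exchange,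
      unitors_inv_equal]
  exact solid_of_whiskerRight_eq (l.app (𝟙_ C))
    (eq_of_precomp_of_local l (l.app (𝟙_ C)) (key (l.app (𝟙_ C))))
end

section
/- Let C be a closed symmetric monoidal category and (R, μ, η) a solid monoid in C. Define the endofunctor G = ihom R : C ⥤ C, X ↦ Hom_C(R, X) (the internal hom), and define c : G ⟶ 𝟭 C by letting c_X be the internal precomposition map Hom_C(η, X) : Hom_C(R, X) → Hom_C(𝟙_C, X) followed by the canonical isomorphism Hom_C(𝟙_C, X) ≅ X. Then (G, c) is a colocalization functor: c is a natural transformation satisfying c_{G X} = G(c_X) and c_{G X} is an isomorphism for every object X. -/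
/-!
Unwinding the definition, `c_X` is evaluation at `η`, i.e. the composite
`[R, X] ≅ 𝟙 ⊗ [R, X] ⟶ R ⊗ [R, X] ⟶ X` (`ihomAugmentation_app`).  For a solid monoid, the two
unit laws identify both `R ≅ R ⊗ 𝟙 ⟶ R ⊗ R` and `R ≅ 𝟙 ⊗ R ⟶ R ⊗ R` with `μ⁻¹`.  The transposes
of `c_{[R, X]}` and `[R, c_X]` as maps `R ⊗ [R, [R, X]] ⟶ X` insert `η` on the right and on the
left of `R`, respectively, and then evaluate twice, so they agree.  The same description shows
that `c_{[R, X]}` is inverse to precomposition with `μ`, `[R, X] ⟶ [R ⊗ R, X] ≅ [R, [R, X]]`.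
-/

open CategoryTheory MonoidalCategory MonoidalClosed

/-- The augmentation of the internal-hom functor `ihom R` associated to a monoid
`(R, μ, η)`: internal precomposition with `η` followed by the canonical isomorphism
`Hom(𝟙_ C, -) ≅ 𝟭 C`. -/
noncomputable def ihomAugmentation {C : Type*} [Category C] [MonoidalCategory C]
    [SymmetricCategory C] [MonoidalClosed C] (R : C) (η : 𝟙_ C ⟶ R) :
    ihom R ⟶ 𝟭 C :=
  MonoidalClosed.pre η ≫ MonoidalClosed.unitNatIso.inv

section

variable {C : Type*} [Category C] [MonoidalCategory C] [SymmetricCategory C] [MonoidalClosed C]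

/-- The inverse of the canonical isomorphism `X ≅ Hom(𝟙_ C, X)` is evaluation at the unit. -/
lemma unitNatIso_inv_app_eq (X : C) :
    (unitNatIso (C := C)).inv.app X = (λ_ _).inv ≫ (ihom.ev (𝟙_ C)).app X := by
  have h : (unitNatIso (C := C)).hom.app X = curry (λ_ X).hom := by
    simp [unitNatIso, conjugateIsoEquiv, conjugateEquiv_apply_app, curry_eq]
  have h2 : (unitNatIso (C := C)).hom.app X ≫ ((λ_ _).inv ≫ (ihom.ev (𝟙_ C)).app X) = 𝟙 X := by
    rw [h, leftUnitor_inv_naturality_assoc, whiskerLeft_curry_ihom_ev_app]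
    exact (λ_ X).inv_hom_id
  rw [← cancel_epi ((unitNatIso (C := C)).hom.app X), h2]
  exact Iso.hom_inv_id_app _ _

/-- The augmentation is evaluation at `η`. -/
lemma ihomAugmentation_app (R : C) (η : 𝟙_ C ⟶ R) (X : C) :
    (ihomAugmentation R η).app X =
      (λ_ ((ihom R).obj X)).inv ≫ η ▷ (ihom R).obj X ≫ (ihom.ev R).app X := by
  rw [ihomAugmentation, NatTrans.comp_app, unitNatIso_inv_app_eq,
    leftUnitor_inv_naturality_assoc, id_tensor_pre_app_comp_ev]

/-- Composing a map into `Hom(R, X)` with the augmentation evaluates its transpose at `η`. -/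
lemma comp_ihomAugmentation_app (R : C) (η : 𝟙_ C ⟶ R) {X Y : C} (f : Y ⟶ (ihom R).obj X) :
    f ≫ (ihomAugmentation R η).app X = (λ_ Y).inv ≫ η ▷ Y ≫ uncurry f := by
  rw [ihomAugmentation_app, leftUnitor_inv_naturality_assoc, whisker_exchange_assoc, uncurry_eq]

/-- The transpose of `c_{Hom(R, X)}` splits `R` by `μ⁻¹` and then evaluates twice; this uses the
right unit law. -/
lemma whiskerLeft_ihomAugmentation_app_ev (R : C) (μ : R ⊗ R ⟶ R) (η : 𝟙_ C ⟶ R) [IsIso μ]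
    (h_mul_one : (R ◁ η) ≫ μ = (ρ_ R).hom) (X : C) :
    R ◁ (ihomAugmentation R η).app ((ihom R).obj X) ≫ (ihom.ev R).app X =
      inv μ ▷ _ ≫ (α_ R R _).hom ≫ R ◁ (ihom.ev R).app ((ihom R).obj X) ≫
        (ihom.ev R).app X := by
  have h : inv μ = (ρ_ R).inv ≫ R ◁ η := by
    rw [IsIso.inv_eq_of_inv_hom_id]
    rw [Category.assoc, h_mul_one, Iso.inv_hom_id]
  rw [ihomAugmentation_app, h]
  simp

end

/-- If `(R, μ, η)` is a solid monoid in a closed symmetric monoidal category, then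
`(ihom R, c)`, where `c` is internal precomposition with `η` composed with the canonical
isomorphism `Hom(𝟙_ C, X) ≅ X`, is a colocalization functor. -/
theorem solid_monoid_gives_mapping_colocalization {C : Type*} [Category C] [MonoidalCategory C]
    [SymmetricCategory C] [MonoidalClosed C]
    (R : C) (μ : R ⊗ R ⟶ R) (η : 𝟙_ C ⟶ R)
    (h_one_mul : (η ▷ R) ≫ μ = (λ_ R).hom)
    (h_mul_one : (R ◁ η) ≫ μ = (ρ_ R).hom)
    (h_assoc : (μ ▷ R) ≫ μ = (α_ R R R).hom ≫ (R ◁ μ) ≫ μ)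
    (h_solid : IsIso μ) :
    ∀ X : C,
      (ihomAugmentation R η).app ((ihom R).obj X) =
        (ihom R).map ((ihomAugmentation R η).app X) ∧
      IsIso ((ihomAugmentation R η).app ((ihom R).obj X)) := by

  intro X
  have key := whiskerLeft_ihomAugmentation_app_ev R μ η h_mul_one X
  constructor
  · apply uncurry_injective
    rw [uncurry_ihom_map, comp_ihomAugmentation_app, uncurry_eq, uncurry_eq, key]
    -- The left unit law gives the other description of `μ⁻¹`.
    have h : inv μ = (λ_ R).inv ≫ η ▷ R := by
      rw [IsIso.inv_eq_of_inv_hom_id]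
      rw [Category.assoc, h_one_mul, Iso.inv_hom_id]
    rw [h]
    simp
  · -- The inverse is the double transpose of `R ⊗ (R ⊗ Hom(R, X)) ⟶ R ⊗ Hom(R, X) ⟶ X`.
    refine ⟨curry (curry ((α_ R R _).inv ≫ μ ▷ _ ≫ (ihom.ev R).app X)), ?_, ?_⟩
    · apply uncurry_injective
      apply uncurry_injective
      rw [uncurry_natural_left, uncurry_natural_left, uncurry_curry, uncurry_curry,
        associator_inv_naturality_right_assoc, whisker_exchange_assoc, key,
        ← comp_whiskerRight_assoc, IsIso.hom_inv_id, id_whiskerRight, Category.id_comp,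
        Iso.inv_hom_id_assoc]
      rw [uncurry_id_eq_ev, uncurry_eq]
    · dsimp only [Functor.id_obj]
      rw [comp_ihomAugmentation_app, uncurry_curry]
      apply uncurry_injective
      rw [uncurry_natural_left, uncurry_natural_left, uncurry_curry, uncurry_id_eq_ev]
      rw [← whiskerLeft_comp_assoc]
      have h : R ◁ ((λ_ ((ihom R).obj X)).inv ≫ η ▷ _) ≫ (α_ R R _).inv ≫ μ ▷ _ = 𝟙 _ := by
        have : (ρ_ R).inv ≫ R ◁ η ≫ μ = 𝟙 _ := by rw [h_mul_one, Iso.inv_hom_id]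
        have h3 := congrArg (fun t => t ▷ ((ihom R).obj X)) this
        simpa using h3
      rw [reassoc_of% h]
end

section
/- Let C be a closed symmetric monoidal category and let (G, c) be a colocalization functor on C which is mapping, i.e., there exists an object A of C and a natural isomorphism G ≅ ihom A (the internal-hom functor X ↦ Hom_C(A, X)). Then A admits the structure of a solid monoid, i.e., a monoid structure whose multiplication A ⊗ A → A is an isomorphism. -/
/-!
Composing `c` with `e⁻¹` gives a natural transformation `t : ihom A ⟶ 𝟭 C`, whose mate is a
natural map `d_X : X ⟶ A ⊗ X`. Under the tensor-hom adjunction, precomposition with `A ◁ d_X`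
becomes postcomposition with `t_{ihom A Y}`, which is invertible; hence `A ◁ d_X` is invertible
(`isIso_whiskerLeft_mate`). Taking `X = 𝟙_ C` yields `η : 𝟙_ C ⟶ A` with `A ◁ η` invertible, and
by symmetry `η ▷ A` is invertible. Note that `d_X` need not be `η ▷ X` up to unitors, since `t` is
not assumed to be enriched; only the component at the unit is used.

It remains to see that such an idempotent `η` makes `A` a solid monoid (`solid_of_idempotent`).
Maps from `A` to an object `B` with `η ▷ B` invertible are determined by their restriction along `η`
(`eq_of_unit_comp_eq`). Therefore `λ⁻¹ ≫ η ▷ A` and `ρ⁻¹ ≫ A ◁ η` coincide, both restricting to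
`η ⊗ η`. Their common inverse is the multiplication, and associativity may be checked after
precomposing with the isomorphism `(η ▷ A) ▷ A`.
-/

open CategoryTheory MonoidalCategory MonoidalClosed

/-- The mate `X ⟶ A ⊗ X` of `t : ihom A ⟶ 𝟭 C` becomes invertible after tensoring with `A`. -/
lemma isIso_whiskerLeft_mate {C : Type*} [Category C] [MonoidalCategory C]
    [MonoidalClosed C] (A : C) (t : ihom A ⟶ 𝟭 C)
    (ht : ∀ Y : C, IsIso (t.app ((ihom A).obj Y))) (X : C) :
    IsIso (A ◁ ((ihom.coev A).app X ≫ t.app (A ⊗ X))) := by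
  have key : ∀ {Z : C} (g : A ⊗ X ⟶ Z),
      ((ihom.coev A).app X ≫ t.app (A ⊗ X)) ≫ g = curry g ≫ t.app Z := by
    intro Z g
    have := t.naturality g
    simp only [Functor.id_map] at this
    rw [curry_eq, Category.assoc, Category.assoc]
    exact congrArg _ this.symm
  have key2 : ∀ {Y : C} (f : A ⊗ (A ⊗ X) ⟶ Y),
      curry (A ◁ ((ihom.coev A).app X ≫ t.app (A ⊗ X)) ≫ f) =
        curry (curry f) ≫ t.app ((ihom A).obj Y) := by
    intro Y f
    rw [curry_natural_left]
    exact key (curry f)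
  rw [isIso_iff_coyoneda_map_bijective]
  intro Y
  have := ht Y
  constructor
  · intro f g hfg
    have h := congrArg curry hfg
    simp only [key2] at h
    exact curry_injective (curry_injective ((cancel_mono _).1 h))
  · intro g
    refine ⟨uncurry (uncurry (curry g ≫ inv (t.app ((ihom A).obj Y)))), ?_⟩
    apply curry_injective
    refine (key2 _).trans ?_
    rw [curry_uncurry, curry_uncurry, Category.assoc]
    exact (congrArg _ (IsIso.inv_hom_id _)).trans (Category.comp_id _)

/-- If `A ◁ η` is invertible, maps from `A` into an object `B` with `η ▷ B` invertible are
determined by their restriction along `η`. -/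
lemma eq_of_unit_comp_eq {C : Type*} [Category C] [MonoidalCategory C] {A B : C}
    (η : 𝟙_ C ⟶ A) [IsIso (A ◁ η)] [IsIso (η ▷ B)] {f g : A ⟶ B} (h : η ≫ f = η ≫ g) :
    f = g := by
  have h1 : A ◁ f = A ◁ g := by
    rw [← cancel_epi (A ◁ η), ← whiskerLeft_comp, ← whiskerLeft_comp, h]
  have h2 : 𝟙_ C ◁ f = 𝟙_ C ◁ g := by
    rw [← cancel_mono (η ▷ B), whisker_exchange, whisker_exchange, h1]
  simpa using h2

lemma solid_of_idempotent {C : Type*} [Category C] [MonoidalCategory C] {A : C}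
    (η : 𝟙_ C ⟶ A) [IsIso (A ◁ η)] [IsIso (η ▷ A)] :
    ∃ (μ : A ⊗ A ⟶ A) (η : 𝟙_ C ⟶ A),
      (η ▷ A) ≫ μ = (λ_ A).hom ∧
      (A ◁ η) ≫ μ = (ρ_ A).hom ∧
      (μ ▷ A) ≫ μ = (α_ A A A).hom ≫ (A ◁ μ) ≫ μ ∧
      IsIso μ := by
  have : IsIso (η ▷ (A ⊗ A)) := by
    rw [← Iso.inv_hom_id_assoc (α_ (𝟙_ C) A A) (η ▷ (A ⊗ A)), ← associator_naturality_left]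
    infer_instance
  have huv : (λ_ A).inv ≫ η ▷ A = (ρ_ A).inv ≫ A ◁ η := by
    apply eq_of_unit_comp_eq η
    rw [leftUnitor_inv_naturality_assoc, rightUnitor_inv_naturality_assoc, whisker_exchange,
      unitors_inv_equal]
  have h1 : η ▷ A ≫ inv (A ◁ η) ≫ (ρ_ A).hom = (λ_ A).hom := by
    rw [Iso.inv_comp_eq] at huv
    rw [huv]
    simp
  refine ⟨inv (A ◁ η) ≫ (ρ_ A).hom, η, h1, by simp, ?_, inferInstance⟩
  generalize inv (A ◁ η) ≫ (ρ_ A).hom = μ at h1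
  rw [← cancel_epi (η ▷ A ▷ A), ← comp_whiskerRight_assoc, h1, associator_naturality_left_assoc,
    ← whisker_exchange_assoc, h1]
  simp

/-- If `(G, c)` is a mapping colocalization functor, i.e. `G ≅ ihom A` for some object `A`,
then `A` admits the structure of a solid monoid. -/
theorem mapping_colocalization_gives_solid {C : Type*} [Category C] [MonoidalCategory C]
    [SymmetricCategory C] [MonoidalClosed C] (G : C ⥤ C) (c : G ⟶ 𝟭 C)
    (h_idem : ∀ X : C, c.app (G.obj X) = G.map (c.app X))
    (h_iso : ∀ X : C, IsIso (c.app (G.obj X)))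
    (A : C) (e : G ≅ ihom A) :
    ∃ (μ : A ⊗ A ⟶ A) (η : 𝟙_ C ⟶ A),
      (η ▷ A) ≫ μ = (λ_ A).hom ∧
      (A ◁ η) ≫ μ = (ρ_ A).hom ∧
      (μ ▷ A) ≫ μ = (α_ A A A).hom ≫ (A ◁ μ) ≫ μ ∧
      IsIso μ := by
  have ht : ∀ Y : C, IsIso ((e.inv ≫ c).app ((ihom A).obj Y)) := by
    intro Y
    have := h_iso Y
    -- Naturality of `c` along `e` moves invertibility from `G.obj Y` to `(ihom A).obj Y`.
    have hc : c.app ((ihom A).obj Y) =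
        G.map (e.inv.app Y) ≫ c.app (G.obj Y) ≫ e.hom.app Y := by
      have := c.naturality (e.inv.app Y)
      simp only [Functor.id_map] at this
      rw [reassoc_of% this]
      simp
    have : IsIso (c.app ((ihom A).obj Y)) := by
      rw [hc]
      infer_instance
    rw [NatTrans.comp_app]
    infer_instance
  let d : 𝟙_ C ⟶ A ⊗ 𝟙_ C := (ihom.coev A).app (𝟙_ C) ≫ (e.inv ≫ c).app (A ⊗ 𝟙_ C)
  have hd : IsIso (A ◁ d) := isIso_whiskerLeft_mate A (e.inv ≫ c) ht (𝟙_ C)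
  let η : 𝟙_ C ⟶ A := d ≫ (ρ_ A).hom
  have hη : IsIso (A ◁ η) := by
    rw [whiskerLeft_comp]
    infer_instance
  have hη' : IsIso (η ▷ A) := by
    rw [← Iso.hom_inv_id_assoc (β_ (𝟙_ C) A) (η ▷ A), ← BraidedCategory.braiding_inv_naturality_right]
    infer_instance
  exact solid_of_idempotent η
end

section
/- Let C be a closed symmetric monoidal category, (R, μ, η) a solid monoid in C, and let (L, l) be the associated smashing localization functor with L X = X ⊗ R and l_X = ρ_X⁻¹ ≫ (X ◁ η). Then (L, l) is a closed localization functor: for every morphism f : X → Y such that L(f) is an isomorphism and every object Z such that l_Z is an isomorphism, the internal precomposition map Hom_C(f, Z) : Hom_C(Y, Z) → Hom_C(X, Z) is an isomorphism. -/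
/-!
An object `Z` with `l_Z` invertible is orthogonal to every morphism `g` with `g ▷ R` invertible:
naturality of `l` gives `a ≫ l_Z = l_B ≫ a ▷ R`, so a map `a : B ⟶ Z` is determined by `a ▷ R`,
and an extension of `h : A ⟶ Z` along `g : A ⟶ B` is `l_B ≫ (g ▷ R)⁻¹ ≫ h ▷ R ≫ l_Z⁻¹`
(`bijective_precomp_of_isIso_whiskerRight`).
By the braiding, `f ▷ R` invertible implies `(f ▷ W) ▷ R` invertible for every `W`. Under currying,
orthogonality of `Z` to all the `f ▷ W` says that composition with `Hom(f, Z)` is bijective on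
maps out of every `W`, so the Yoneda lemma concludes.
-/

open CategoryTheory MonoidalCategory MonoidalClosed

theorem unit_naturality {C : Type*} [Category C] [MonoidalCategory C]
    {R : C} (η : 𝟙_ C ⟶ R) {A B : C} (g : A ⟶ B) :
    g ≫ (ρ_ B).inv ≫ B ◁ η = ((ρ_ A).inv ≫ A ◁ η) ≫ g ▷ R := by
  rw [Category.assoc, whisker_exchange, rightUnitor_inv_naturality_assoc]

/-- Local objects are orthogonal to equivalences. -/
theorem bijective_precomp_of_isIso_whiskerRight {C : Type*} [Category C] [MonoidalCategory C]
    {R : C} (η : 𝟙_ C ⟶ R) {A B : C} (g : A ⟶ B) [IsIso (g ▷ R)]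
    (Z : C) [IsIso ((ρ_ Z).inv ≫ Z ◁ η)] :
    Function.Bijective (fun a : B ⟶ Z => g ≫ a) := by
  constructor
  · intro a b hab
    have hab : g ≫ a = g ≫ b := hab
    have hR : a ▷ R = b ▷ R := by
      rw [← cancel_epi (g ▷ R), ← comp_whiskerRight, ← comp_whiskerRight, hab]
    rw [← cancel_mono ((ρ_ Z).inv ≫ Z ◁ η), unit_naturality, unit_naturality, hR]
  · intro h
    refine ⟨((ρ_ B).inv ≫ B ◁ η) ≫ inv (g ▷ R) ≫ h ▷ R ≫ inv ((ρ_ Z).inv ≫ Z ◁ η), ?_⟩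
    change g ≫ ((ρ_ B).inv ≫ B ◁ η) ≫ inv (g ▷ R) ≫ h ▷ R ≫ inv ((ρ_ Z).inv ≫ Z ◁ η) = h
    rw [← Category.assoc g, unit_naturality, Category.assoc, IsIso.hom_inv_id_assoc,
      ← Category.assoc, ← unit_naturality, Category.assoc, IsIso.hom_inv_id, Category.comp_id]

/-- Equivalences are stable under tensoring: `(f ▷ W) ▷ R` is conjugate to `(f ▷ R) ▷ W`. -/
theorem isIso_whiskerRight_whiskerRight {C : Type*} [Category C] [MonoidalCategory C]
    [BraidedCategory C] (R W : C) {X Y : C} (f : X ⟶ Y) [IsIso (f ▷ R)] :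
    IsIso (f ▷ W ▷ R) := by
  have h : f ▷ W ▷ R = ((α_ X W R).hom ≫ X ◁ (β_ W R).hom ≫ (α_ X R W).inv) ≫ f ▷ R ▷ W ≫
      (α_ Y R W).hom ≫ Y ◁ (β_ W R).inv ≫ (α_ Y W R).inv := by
    simp only [Category.assoc, associator_naturality_left_assoc, Iso.inv_hom_id_assoc,
      whisker_exchange_assoc, whiskerLeft_hom_inv_assoc, associator_inv_naturality_left,
      Iso.hom_inv_id_assoc]
  rw [h]
  infer_instance

/-- The smashing localization associated to a solid monoid `(R, μ, η)` is a closed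
localization: for every `L`-equivalence `f` and every `L`-local object `Z`, internal
precomposition with `f` into `Z` is an isomorphism. -/
theorem solid_smashing_is_closed_localization {C : Type*} [Category C] [MonoidalCategory C]
    [SymmetricCategory C] [MonoidalClosed C]
    (R : C) (μ : R ⊗ R ⟶ R) (η : 𝟙_ C ⟶ R)
    (h_one_mul : (η ▷ R) ≫ μ = (λ_ R).hom)
    (h_mul_one : (R ◁ η) ≫ μ = (ρ_ R).hom)
    (h_assoc : (μ ▷ R) ≫ μ = (α_ R R R).hom ≫ (R ◁ μ) ≫ μ)
    (h_solid : IsIso μ) :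
    ∀ {X Y : C} (f : X ⟶ Y), IsIso ((tensorRight R).map f) →
      ∀ Z : C, IsIso ((ρ_ Z).inv ≫ (Z ◁ η)) →
        IsIso ((MonoidalClosed.pre f).app Z) := by
  intro X Y f hf Z hZ
  have hf' : IsIso (f ▷ R) := hf
  rw [isIso_iff_yoneda_map_bijective]
  intro W
  have := isIso_whiskerRight_whiskerRight R W f
  have hb := bijective_precomp_of_isIso_whiskerRight η (f ▷ W) Z
  constructor
  · intro a b hab
    apply uncurry_injective
    apply hb.1
    change f ▷ W ≫ uncurry a = f ▷ W ≫ uncurry b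
    rw [← uncurry_pre_app, ← uncurry_pre_app]
    exact congrArg uncurry hab
  · intro h
    obtain ⟨k, hk⟩ := hb.2 (uncurry h)
    refine ⟨curry k, ?_⟩
    change curry k ≫ (pre f).app Z = h
    rw [curry_pre_app, ← curry_uncurry h]
    exact congrArg curry hk
end

section
/- Let C be a closed symmetric monoidal category and (R, μ, η) a solid monoid in C. Then for every object Z of C, the morphism ρ_Z⁻¹ ≫ (Z ◁ η) : Z → Z ⊗ R is an isomorphism if and only if the internal precomposition map Hom_C(η, Z) : Hom_C(R, Z) → Hom_C(𝟙_C, Z) is an isomorphism. (That is, the local objects of the smashing localization X ↦ X ⊗ R coincide with the η-local objects.) -/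
open CategoryTheory MonoidalCategory MonoidalClosed

/-!
By the braiding, `Z` is local for the smashing localization iff `η ▷ Z : 𝟙 ⊗ Z ⟶ R ⊗ Z` is
invertible; by adjunction, `Z` is `η`-local iff every `𝟙 ⊗ Y ⟶ Z` extends uniquely along
`η ▷ Y` to `R ⊗ Y ⟶ Z`. Solidity enters through the unit laws: they make `η ▷ R` and `R ◁ η`
invertible.

If `η ▷ Z` is invertible, an extension of `f` is obtained by applying `R ⊗ -` to `f` and then
the inverse of `η ▷ Z`; it is unique because `R ⊗ -` inverts `η ▷ Y` (`eq_of_unit_comp_eq`).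
Conversely, if `Z` is `η`-local, extending `λ_ Z` along `η ▷ Z` gives a retraction of the unit
map `Z ⟶ R ⊗ Z`. It is a two-sided inverse, since `R ⊗ Z` is a target for which extensions along `η ▷ Z`
are unique.
-/

section

variable {C : Type*} [Category C] [MonoidalCategory C]

theorem isIso_rightUnit_iff [SymmetricCategory C] {R : C} (η : 𝟙_ C ⟶ R) (Z : C) :
    IsIso ((ρ_ Z).inv ≫ (Z ◁ η)) ↔ IsIso (η ▷ Z) := by
  have h : η ▷ Z = (β_ (𝟙_ C) Z).hom ≫ (Z ◁ η) ≫ (β_ R Z).inv := by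
    rw [← BraidedCategory.braiding_naturality_left_assoc]
    simp
  rw [h, isIso_comp_left_iff, isIso_comp_left_iff, isIso_comp_right_iff]

/-- When the unit map of `Z` is invertible, naturality of the unit recovers `g : X ⟶ Z` from
`R ◁ g`. -/
theorem eq_unit_extension {R : C} (η : 𝟙_ C ⟶ R) {Z X : C} [IsIso (η ▷ Z)] (g : X ⟶ Z) :
    g = (λ_ X).inv ≫ η ▷ X ≫ R ◁ g ≫ inv (η ▷ Z) ≫ (λ_ Z).hom := by
  rw [← whisker_exchange_assoc]
  simp

theorem eq_of_unit_comp_eq_s8 {R : C} (η : 𝟙_ C ⟶ R) [IsIso (R ◁ η)] {Y Z : C} [IsIso (η ▷ Z)]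
    {g₁ g₂ : R ⊗ Y ⟶ Z} (h : η ▷ Y ≫ g₁ = η ▷ Y ≫ g₂) : g₁ = g₂ := by
  have hiso : IsIso (R ◁ (η ▷ Y)) := by
    have : R ◁ (η ▷ Y) = (α_ _ _ _).inv ≫ (R ◁ η) ▷ Y ≫ (α_ _ _ _).hom := by simp
    rw [this]
    infer_instance
  have hR : R ◁ g₁ = R ◁ g₂ := by
    rw [← cancel_epi (R ◁ (η ▷ Y)), ← whiskerLeft_comp, ← whiskerLeft_comp, h]
  rw [eq_unit_extension η g₁, eq_unit_extension η g₂, hR]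

theorem isIso_pre_of_isIso_unit [MonoidalClosed C] {R : C} (η : 𝟙_ C ⟶ R) [IsIso (R ◁ η)]
    (Z : C) [IsIso (η ▷ Z)] : IsIso ((MonoidalClosed.pre η).app Z) := by
  let W : C := (ihom (𝟙_ C)).obj Z
  let f : 𝟙_ C ⊗ W ⟶ Z := (ihom.ev (𝟙_ C)).app Z
  -- The extension along `η ▷ W` of the evaluation `f`.
  let g : R ⊗ W ⟶ Z := R ◁ ((λ_ W).inv ≫ f) ≫ inv (η ▷ Z) ≫ (λ_ Z).hom
  have hg : η ▷ W ≫ g = f := by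
    have := eq_unit_extension η ((λ_ W).inv ≫ f)
    rw [← cancel_epi (λ_ W).inv]
    exact this.symm
  have hsec : curry g ≫ (pre η).app Z = 𝟙 _ := by
    rw [curry_pre_app, hg, curry_eq_iff, uncurry_id_eq_ev]
  refine ⟨curry g, ?_, hsec⟩
  apply uncurry_injective
  apply eq_of_unit_comp_eq_s8 η
  rw [← uncurry_pre_app, ← uncurry_pre_app, Category.assoc, hsec, Category.id_comp,
    Category.comp_id]

theorem isIso_unit_of_isIso_pre [MonoidalClosed C] {R : C} (η : 𝟙_ C ⟶ R) [IsIso (R ◁ η)]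
    [IsIso (η ▷ R)] (Z : C) [IsIso ((MonoidalClosed.pre η).app Z)] : IsIso (η ▷ Z) := by
  -- The extension of `λ_ Z` along `η ▷ Z`.
  let r : R ⊗ Z ⟶ Z := uncurry (curry (λ_ Z).hom ≫ inv ((pre η).app Z))
  have hr : η ▷ Z ≫ r = (λ_ Z).hom := by
    rw [← uncurry_pre_app]
    simp
  have hloc : IsIso (η ▷ (R ⊗ Z)) := by
    have : η ▷ (R ⊗ Z) = (α_ _ _ _).inv ≫ (η ▷ R) ▷ Z ≫ (α_ _ _ _).hom := by simp
    rw [this]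
    infer_instance
  refine ⟨r ≫ (λ_ Z).inv, by rw [reassoc_of% hr, Iso.hom_inv_id], ?_⟩
  apply eq_of_unit_comp_eq_s8 η
  rw [Category.assoc, reassoc_of% hr]
  simp

end

/-- For a solid monoid `(R, μ, η)`, an object `Z` is local for the smashing localization
`X ↦ X ⊗ R` if and only if it is `η`-local, i.e. internal precomposition with `η` into `Z`
is an isomorphism. -/
theorem smashing_local_iff_unit_local {C : Type*} [Category C] [MonoidalCategory C]
    [SymmetricCategory C] [MonoidalClosed C]
    (R : C) (μ : R ⊗ R ⟶ R) (η : 𝟙_ C ⟶ R)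
    (h_one_mul : (η ▷ R) ≫ μ = (λ_ R).hom)
    (h_mul_one : (R ◁ η) ≫ μ = (ρ_ R).hom)
    (h_assoc : (μ ▷ R) ≫ μ = (α_ R R R).hom ≫ (R ◁ μ) ≫ μ)
    (h_solid : IsIso μ) :
    ∀ Z : C, IsIso ((ρ_ Z).inv ≫ (Z ◁ η)) ↔ IsIso ((MonoidalClosed.pre η).app Z) := by
  intro Z
  have h₁ : IsIso (η ▷ R) := by
    rw [← isIso_comp_right_iff _ μ, h_one_mul]
    infer_instance
  have h₂ : IsIso (R ◁ η) := by
    rw [← isIso_comp_right_iff _ μ, h_mul_one]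
    infer_instance
  rw [isIso_rightUnit_iff]
  exact ⟨fun _ => isIso_pre_of_isIso_unit η Z, fun _ => isIso_unit_of_isIso_pre η Z⟩
end

section
/- Let C be a symmetric monoidal category, (R, μ, η) a solid monoid in C, and let (X, m) be a left R-module object in C, i.e., m : R ⊗ X → X satisfies the associativity and unit axioms for the monoid R. Then the morphism λ_X⁻¹ ≫ (η ▷ X) : X → R ⊗ X is an isomorphism (with inverse m); equivalently, X lies in the essential image of the smashing localization associated to R. -/
/-!
Solidity makes the two unit maps `R ⟶ R ⊗ R`, inserting `η` on the left or on the right, equal: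
both are sections of the isomorphism `μ`. Tensoring with `X`, inserting `η` in front of `R ⊗ X`
agrees with inserting it between `R` and `X`. By naturality, `m` followed by the unit map of `X`
inserts `η` in front of `R ⊗ X` and then applies `R ◁ m`; inserting `η` in the middle instead, the
unit axiom of the action gives the identity.
-/

open CategoryTheory MonoidalCategory

/-- If `(R, μ, η)` is a solid monoid and `(X, m)` is a left `R`-module object, then
`(λ_ X).inv ≫ (η ▷ X) : X ⟶ R ⊗ X` is an isomorphism with inverse `m`. -/
theorem module_over_solid_is_local {C : Type*} [Category C] [MonoidalCategory C]
    [SymmetricCategory C]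
    (R : C) (μ : R ⊗ R ⟶ R) (η : 𝟙_ C ⟶ R)
    (h_one_mul : (η ▷ R) ≫ μ = (λ_ R).hom)
    (h_mul_one : (R ◁ η) ≫ μ = (ρ_ R).hom)
    (h_assoc : (μ ▷ R) ≫ μ = (α_ R R R).hom ≫ (R ◁ μ) ≫ μ)
    (h_solid : IsIso μ)
    (X : C) (m : R ⊗ X ⟶ X)
    (h_one_act : (η ▷ X) ≫ m = (λ_ X).hom)
    (h_act_assoc : (μ ▷ X) ≫ m = (α_ R R X).hom ≫ (R ◁ m) ≫ m) :
    (((λ_ X).inv ≫ (η ▷ X)) ≫ m = 𝟙 X ∧ m ≫ ((λ_ X).inv ≫ (η ▷ X)) = 𝟙 (R ⊗ X)) ∧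
      IsIso ((λ_ X).inv ≫ (η ▷ X)) := by
  have h_left : ((λ_ X).inv ≫ (η ▷ X)) ≫ m = 𝟙 X := by
    rw [Category.assoc, h_one_act, Iso.inv_hom_id]
  have h_units : (λ_ R).inv ≫ η ▷ R = (ρ_ R).inv ≫ R ◁ η := by
    rw [← cancel_mono μ, Category.assoc, Category.assoc, h_one_mul, h_mul_one,
      Iso.inv_hom_id, Iso.inv_hom_id]
  have h_insert : (λ_ (R ⊗ X)).inv ≫ η ▷ (R ⊗ X) = R ◁ ((λ_ X).inv ≫ η ▷ X) := by
    calc (λ_ (R ⊗ X)).inv ≫ η ▷ (R ⊗ X)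
        = ((λ_ R).inv ≫ η ▷ R) ▷ X ≫ (α_ R R X).hom := by simp
      _ = ((ρ_ R).inv ≫ R ◁ η) ▷ X ≫ (α_ R R X).hom := by rw [h_units]
      _ = R ◁ ((λ_ X).inv ≫ η ▷ X) := by simp
  have h_right : m ≫ ((λ_ X).inv ≫ (η ▷ X)) = 𝟙 (R ⊗ X) := by
    calc m ≫ ((λ_ X).inv ≫ (η ▷ X))
        = ((λ_ (R ⊗ X)).inv ≫ η ▷ (R ⊗ X)) ≫ R ◁ m := by
          rw [leftUnitor_inv_naturality_assoc, Category.assoc, whisker_exchange]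
      _ = 𝟙 (R ⊗ X) := by
          rw [h_insert, ← whiskerLeft_comp, h_left, whiskerLeft_id]
  exact ⟨⟨h_left, h_right⟩, ⟨m, h_left, h_right⟩⟩
end

section
/- Let C be a closed symmetric monoidal category, (R, μ, η) a solid monoid in C, and let (X, m) be a left R-module object in C. Then the internal precomposition map Hom_C(η, X) : Hom_C(R, X) → Hom_C(𝟙_C, X) is an isomorphism; equivalently, composing with the canonical isomorphism Hom_C(𝟙_C, X) ≅ X, the internal evaluation-at-the-unit map Hom_C(R, X) → X is an isomorphism. -/
/-!
By the Yoneda lemma for the tensor-hom adjunction, the claim is that restriction along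
`η ▷ Y : 𝟙_ C ⊗ Y ⟶ R ⊗ Y` is a bijection on maps into `X`. The inverse sends `f` to its
`R`-linear extension `r ⊗ y ↦ r • f y`, and the unit axiom of the action says that this extension
restricts to `f`. Conversely, every `g : R ⊗ Y ⟶ X` is the extension of its restriction: because
`μ` is an isomorphism, it is a monomorphism, so `r ⊗ 1 = 1 ⊗ r` in `R ⊗ R`, and hence
`r • g (1 ⊗ y) = 1 • g (r ⊗ y) = g (r ⊗ y)`.
-/

open CategoryTheory MonoidalCategory MonoidalClosed

/-- The two unit inclusions `r ↦ r ⊗ 1` and `r ↦ 1 ⊗ r` agree, as both are sections of the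
monomorphism `μ`. -/
lemma solid_unit_inclusions_eq {C : Type*} [Category C] [MonoidalCategory C]
    {R : C} {μ : R ⊗ R ⟶ R} {η : 𝟙_ C ⟶ R} [Mono μ]
    (h_one_mul : (η ▷ R) ≫ μ = (λ_ R).hom) (h_mul_one : (R ◁ η) ≫ μ = (ρ_ R).hom) :
    (ρ_ R).inv ≫ R ◁ η = (λ_ R).inv ≫ η ▷ R := by
  rw [← cancel_mono μ, Category.assoc, Category.assoc, h_one_mul, h_mul_one]
  simp

/-- Any map `g : R ⊗ Y ⟶ X` is the linear extension of its restriction along `η`. -/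
lemma extension_of_restriction {C : Type*} [Category C] [MonoidalCategory C]
    {R : C} {η : 𝟙_ C ⟶ R} (h : (ρ_ R).inv ≫ R ◁ η = (λ_ R).inv ≫ η ▷ R)
    {X : C} {m : R ⊗ X ⟶ X} (h_one_act : (η ▷ X) ≫ m = (λ_ X).hom)
    {Y : C} (g : R ⊗ Y ⟶ X) :
    R ◁ ((λ_ Y).inv ≫ η ▷ Y ≫ g) ≫ m = g := by
  -- Moves `η` from the second to the first tensor factor: `r ⊗ (1 ⊗ y) = 1 ⊗ (r ⊗ y)`.
  have key : R ◁ ((λ_ Y).inv ≫ η ▷ Y) = (λ_ (R ⊗ Y)).inv ≫ η ▷ (R ⊗ Y) := by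
    have h' := congrArg (fun t => t ▷ Y ≫ (α_ R R Y).hom) h
    simpa using h'
  rw [← Category.assoc, whiskerLeft_comp, key, Category.assoc, Category.assoc,
    ← whisker_exchange_assoc, h_one_act]
  simp

/-- The linear extension `r ⊗ y ↦ r • f y` restricts along `η` to `f`. -/
lemma restriction_of_extension {C : Type*} [Category C] [MonoidalCategory C]
    {R : C} {η : 𝟙_ C ⟶ R}
    {X : C} {m : R ⊗ X ⟶ X} (h_one_act : (η ▷ X) ≫ m = (λ_ X).hom)
    {Y : C} (f : 𝟙_ C ⊗ Y ⟶ X) :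
    η ▷ Y ≫ R ◁ ((λ_ Y).inv ≫ f) ≫ m = f := by
  rw [← whisker_exchange_assoc, h_one_act]
  simp

/-- If `(R, μ, η)` is a solid monoid in a closed symmetric monoidal category and `(X, m)` is a
left `R`-module object, then internal precomposition with `η` into `X`, i.e. the map
`Hom(R, X) ⟶ Hom(𝟙_ C, X)`, is an isomorphism. -/
theorem module_over_solid_is_colocal {C : Type*} [Category C] [MonoidalCategory C]
    [SymmetricCategory C] [MonoidalClosed C]
    (R : C) (μ : R ⊗ R ⟶ R) (η : 𝟙_ C ⟶ R)
    (h_one_mul : (η ▷ R) ≫ μ = (λ_ R).hom)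
    (h_mul_one : (R ◁ η) ≫ μ = (ρ_ R).hom)
    (h_assoc : (μ ▷ R) ≫ μ = (α_ R R R).hom ≫ (R ◁ μ) ≫ μ)
    (h_solid : IsIso μ)
    (X : C) (m : R ⊗ X ⟶ X)
    (h_one_act : (η ▷ X) ≫ m = (λ_ X).hom)
    (h_act_assoc : (μ ▷ X) ≫ m = (α_ R R X).hom ≫ (R ◁ m) ≫ m) :
    IsIso ((MonoidalClosed.pre η).app X) := by
  have h := solid_unit_inclusions_eq h_one_mul h_mul_one
  refine ⟨curry (R ◁ ((λ_ _).inv ≫ (ihom.ev (𝟙_ C)).app X) ≫ m), ?_, ?_⟩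
  · rw [← curry_natural_left, curry_eq_iff, uncurry_id_eq_ev, ← whiskerLeft_comp_assoc,
      leftUnitor_inv_naturality_assoc, id_tensor_pre_app_comp_ev]
    exact extension_of_restriction h h_one_act _
  · rw [curry_pre_app, curry_eq_iff, uncurry_id_eq_ev]
    exact restriction_of_extension h_one_act _
end

section
/- Let C be a closed symmetric monoidal category and (R, μ, η) a solid monoid in C. Then R is a rigid monoid: the internal precomposition map Hom_C(η, R) : Hom_C(R, R) → Hom_C(𝟙_C, R) is an isomorphism. -/
open CategoryTheory MonoidalCategory MonoidalClosed

/-!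
By the tensor-hom adjunction, the claim says that for every `Y` each map `𝟙_ C ⊗ Y ⟶ R` extends
uniquely along `η ▷ Y : 𝟙_ C ⊗ Y ⟶ R ⊗ Y`. An extension is the `R`-linear one,
`(R ◁ g) ≫ μ`. For uniqueness (`eq_of_unit_whiskerRight_comp_eq`), solidity forces the two maps
`η ⊗ R` and `R ⊗ η` from `R` to `R ⊗ R` to agree, both being inverse to `μ`; so every map
`f : R ⊗ Y ⟶ R` is automatically `R`-linear and is determined by its restriction along `η ▷ Y`.
-/

/-- Maps `R ⊗ Y ⟶ R` out of a solid `R` are determined by their restriction along `η ▷ Y`. -/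
theorem eq_of_unit_whiskerRight_comp_eq {C : Type*} [Category C] [MonoidalCategory C]
    {R : C} {μ : R ⊗ R ⟶ R} {η : 𝟙_ C ⟶ R}
    (h_one_mul : (η ▷ R) ≫ μ = (λ_ R).hom)
    (h_mul_one : (R ◁ η) ≫ μ = (ρ_ R).hom)
    [IsIso μ] {Y : C} {f f' : R ⊗ Y ⟶ R} (h : η ▷ Y ≫ f = η ▷ Y ≫ f') : f = f' := by
  have key : (λ_ R).inv ≫ η ▷ R = (ρ_ R).inv ≫ R ◁ η := by
    rw [← cancel_mono μ, Category.assoc, Category.assoc, h_one_mul, h_mul_one]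
    simp
  have formula (k : R ⊗ Y ⟶ R) :
      k = (ρ_ R).inv ▷ Y ≫ (α_ R (𝟙_ C) Y).hom ≫ R ◁ (η ▷ Y ≫ k) ≫ μ := by
    calc
      k = k ≫ (λ_ R).inv ≫ η ▷ R ≫ μ := by rw [h_one_mul]; simp
      _ = (λ_ (R ⊗ Y)).inv ≫ η ▷ (R ⊗ Y) ≫ R ◁ k ≫ μ := by
        rw [leftUnitor_inv_naturality_assoc, whisker_exchange_assoc]
      _ = ((λ_ R).inv ≫ η ▷ R) ▷ Y ≫ (α_ R R Y).hom ≫ R ◁ k ≫ μ := by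
        simp
      _ = _ := by
        rw [key]
        simp
  rw [formula f, formula f', h]

/-- Every solid monoid `(R, μ, η)` in a closed symmetric monoidal category is rigid: internal
precomposition with the unit, `Hom(R, R) ⟶ Hom(𝟙_ C, R)`, is an isomorphism. -/
theorem solid_monoid_is_rigid {C : Type*} [Category C] [MonoidalCategory C]
    [SymmetricCategory C] [MonoidalClosed C]
    (R : C) (μ : R ⊗ R ⟶ R) (η : 𝟙_ C ⟶ R)
    (h_one_mul : (η ▷ R) ≫ μ = (λ_ R).hom)
    (h_mul_one : (R ◁ η) ≫ μ = (ρ_ R).hom)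
    (h_assoc : (μ ▷ R) ≫ μ = (α_ R R R).hom ≫ (R ◁ μ) ≫ μ)
    (h_solid : IsIso μ) :
    IsIso ((MonoidalClosed.pre η).app R) := by
  have hmono : Mono ((MonoidalClosed.pre η).app R) := by
    constructor
    intro Y a b hab
    apply uncurry_injective
    apply eq_of_unit_whiskerRight_comp_eq h_one_mul h_mul_one
    rw [← uncurry_pre_app, ← uncurry_pre_app, hab]
  -- The section curries the `R`-linear extension of evaluation on `Hom(𝟙_ C, R)`.
  let s : (ihom (𝟙_ C)).obj R ⟶ (ihom R).obj R :=
    curry (R ◁ ((λ_ _).inv ≫ uncurry (𝟙 ((ihom (𝟙_ C)).obj R))) ≫ μ)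
  have hs : s ≫ (MonoidalClosed.pre η).app R = 𝟙 _ := by
    rw [curry_pre_app, curry_eq_iff, ← whisker_exchange_assoc, h_one_mul,
      leftUnitor_naturality, Iso.hom_inv_id_assoc]
  refine ⟨s, ?_, hs⟩
  rw [← cancel_mono ((MonoidalClosed.pre η).app R), Category.assoc, hs, Category.comp_id,
    Category.id_comp]
end

section
/- Let C be a closed symmetric monoidal category and (L, l) a closed localization functor on C. If h : X → Y is an L-equivalence (i.e., L(h) is an isomorphism), then for every object W the whiskered morphism W ◁ h : W ⊗ X → W ⊗ Y is also an L-equivalence. -/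
/-!
By the tensor-hom adjunction, closedness of the localization makes precomposition with `h ▷ W`
bijective on morphisms into local objects. Since every `L.obj A` is local, such a morphism
is an `L`-equivalence (`isIso_map_of_bijective_precomp`, a Yoneda-type argument). The braiding
turns `h ▷ W` into `W ◁ h`.
-/

open CategoryTheory MonoidalCategory MonoidalClosed

/-- A morphism that every local object sees as an isomorphism is an `L`-equivalence. -/
theorem isIso_map_of_bijective_precomp {C : Type*} [Category C] (L : C ⥤ C) (l : 𝟭 C ⟶ L)
    (h_idem : ∀ X : C, l.app (L.obj X) = L.map (l.app X))
    (h_iso : ∀ X : C, IsIso (l.app (L.obj X)))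
    {A B : C} (g : A ⟶ B)
    (hg : ∀ Z : C, IsIso (l.app Z) → Function.Bijective (fun k : B ⟶ Z => g ≫ k)) :
    IsIso (L.map g) := by
  have nat : ∀ {P Q : C} (f : P ⟶ Q), f ≫ l.app Q = l.app P ≫ L.map f :=
    fun f => l.naturality f
  -- The inverse of `L.map g` is induced by the extension `k` of `l.app A` along `g`.
  obtain ⟨k, hk⟩ := (hg (L.obj A) (h_iso A)).2 (l.app A)
  replace hk : g ≫ k = l.app A := hk
  have hk' : k ≫ L.map g = l.app B := by
    apply (hg (L.obj B) (h_iso B)).1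
    change g ≫ k ≫ L.map g = g ≫ l.app B
    rw [← Category.assoc, hk, nat g]
  have := h_iso A
  have := h_iso B
  refine ⟨L.map k ≫ inv (l.app (L.obj A)), ?_, ?_⟩
  · rw [← Category.assoc, ← L.map_comp, hk, IsIso.comp_inv_eq, Category.id_comp]
    exact (h_idem A).symm
  · have e : inv (l.app (L.obj A)) ≫ L.map g = L.map (L.map g) ≫ inv (l.app (L.obj B)) := by
      rw [IsIso.inv_comp_eq, ← Category.assoc, IsIso.eq_comp_inv]
      exact nat (L.map g)
    rw [Category.assoc, e, ← Category.assoc, ← L.map_comp, hk', IsIso.comp_inv_eq,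
      Category.id_comp]
    exact (h_idem B).symm

/-- For a closed localization functor `(L, l)`, if `h : X ⟶ Y` is an `L`-equivalence then so
is `W ◁ h : W ⊗ X ⟶ W ⊗ Y` for every object `W`. -/
theorem whiskerLeft_L_equivalence {C : Type*} [Category C] [MonoidalCategory C]
    [SymmetricCategory C] [MonoidalClosed C]
    (L : C ⥤ C) (l : 𝟭 C ⟶ L)
    (h_idem : ∀ X : C, l.app (L.obj X) = L.map (l.app X))
    (h_iso : ∀ X : C, IsIso (l.app (L.obj X)))
    (h_closed : ∀ {X Y : C} (f : X ⟶ Y), IsIso (L.map f) →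
      ∀ Z : C, IsIso (l.app Z) → IsIso ((MonoidalClosed.pre f).app Z))
    {X Y : C} (h : X ⟶ Y) (h_equiv : IsIso (L.map h)) (W : C) :
    IsIso (L.map (W ◁ h)) := by
  have hr : IsIso (L.map (h ▷ W)) := by
    refine isIso_map_of_bijective_precomp L l h_idem h_iso _ fun Z hZ => ?_
    have := h_closed h h_equiv Z hZ
    constructor
    · intro a b hab
      apply curry_injective
      rw [← cancel_mono ((MonoidalClosed.pre h).app Z), curry_pre_app, curry_pre_app]
      exact congrArg curry hab
    · intro a
      refine ⟨uncurry (curry a ≫ inv ((MonoidalClosed.pre h).app Z)), ?_⟩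
      apply curry_injective
      change curry (h ▷ W ≫ _) = _
      rw [← curry_pre_app, curry_uncurry, Category.assoc, IsIso.inv_hom_id, Category.comp_id]
  have e : W ◁ h = (β_ W X).hom ≫ h ▷ W ≫ (β_ W Y).inv := by
    rw [← Category.assoc, Iso.eq_comp_inv, BraidedCategory.braiding_naturality_right]
  rw [e, L.map_comp, L.map_comp]
  infer_instance
end

section
/- Let C be a closed symmetric monoidal category and (L, l) a closed localization functor on C. If Z is an L-local object (i.e., l_Z is an isomorphism), then for every object W the internal hom Hom_C(W, Z) is also L-local. -/
/-!
Write `H = Hom(W, Z)`. Since `L(l_H) = l_{LH}` is an isomorphism, closedness makes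
`Hom(l_H, Z) : Hom(LH, Z) ⟶ Hom(H, Z)` an isomorphism. Through the tensor-hom adjunction and the
braiding, every map `H ⟶ Hom(W, Z)` therefore factors through `l_H`; factoring the identity
gives a retraction `r` of `l_H`. By naturality of `l`,
`r ≫ l_H = l_{LH} ≫ L(r) = L(l_H ≫ r) = 𝟙`, so `r` is a two-sided inverse.
-/

open CategoryTheory MonoidalCategory MonoidalClosed

/-- For a closed localization functor `(L, l)`, if `Z` is `L`-local then so is the internal
hom `Hom(W, Z)` for every object `W`. -/
theorem ihom_local_of_local {C : Type*} [Category C] [MonoidalCategory C]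
    [SymmetricCategory C] [MonoidalClosed C]
    (L : C ⥤ C) (l : 𝟭 C ⟶ L)
    (h_idem : ∀ X : C, l.app (L.obj X) = L.map (l.app X))
    (h_iso : ∀ X : C, IsIso (l.app (L.obj X)))
    (h_closed : ∀ {X Y : C} (f : X ⟶ Y), IsIso (L.map f) →
      ∀ Z : C, IsIso (l.app Z) → IsIso ((MonoidalClosed.pre f).app Z))
    (Z : C) (h_local : IsIso (l.app Z)) (W : C) :
    IsIso (l.app ((ihom W).obj Z)) := by
  let H := (ihom W).obj Z
  have h_equiv : IsIso (L.map (l.app H)) := h_idem H ▸ h_iso H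
  have h_pre : IsIso ((MonoidalClosed.pre (l.app H)).app Z) := h_closed (l.app H) h_equiv Z h_local
  -- The transpose `W ⟶ Hom(H, Z)` of evaluation, lifted along `Hom(l_H, Z)`.
  let u : W ⟶ (ihom H).obj Z := curry ((β_ H W).hom ≫ (ihom.ev W).app Z)
  let v : W ⟶ (ihom (L.obj H)).obj Z := u ≫ inv ((MonoidalClosed.pre (l.app H)).app Z)
  have h_lift : l.app H ▷ W ≫ uncurry v = (β_ H W).hom ≫ (ihom.ev W).app Z := by
    have h := uncurry_pre_app Z v (l.app H)
    rw [← uncurry_curry ((β_ H W).hom ≫ (ihom.ev W).app Z)]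
    refine h.symm.trans (congrArg uncurry ?_)
    simp [v, u]
  let r : L.obj H ⟶ H := curry ((β_ W (L.obj H)).hom ≫ uncurry v)
  have h_retr : l.app H ≫ r = 𝟙 H := by
    refine (curry_natural_left _ _).symm.trans ?_
    rw [curry_eq_iff, BraidedCategory.braiding_naturality_right_assoc, h_lift, uncurry_id_eq_ev]
    exact SymmetricCategory.symmetry_assoc _ _ _
  refine ⟨r, h_retr, ?_⟩
  have h_nat : r ≫ l.app H = l.app (L.obj H) ≫ L.map r := l.naturality r
  refine h_nat.trans ?_
  rw [h_idem, ← L.map_comp, h_retr]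
  exact L.map_id H
end

section
/- Let C be a closed symmetric monoidal category and (G, c) a closed colocalization functor on C. Then: (a) if Z is a G-colocal object (i.e., c_Z is an isomorphism), then for every object W the tensor product W ⊗ Z is also G-colocal; and (b) if h : X → Y is a G-colocal equivalence (i.e., G(h) is an isomorphism), then for every object W the induced morphism Hom_C(W, h) : Hom_C(W, X) → Hom_C(W, Y) on internal homs is also a G-colocal equivalence. -/
/-!
If `Z` is colocal and `f : X ⟶ Y` is a colocal equivalence, then `Hom(Z, f)` is invertible, so
by adjunction (and the braiding) composition with `f` is a bijection
`C(W ⊗ Z, X) → C(W ⊗ Z, Y)` for every `W`. Both parts follow from this.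

* (a) Apply it to the colocal equivalence `c_{W ⊗ Z}`: the identity of `W ⊗ Z` lifts to a section
  of `c_{W ⊗ Z}`, and naturality of `c` with `c_{G A} = G(c_A)` makes it a two-sided inverse.
* (b) By adjunction, `k = Hom(W, h)` induces a bijection on maps out of every colocal `Z`. Lifting
  `c : G Hom(W, Y) ⟶ Hom(W, Y)` along `k` to `t`, the inverse of `G(k)` is `c⁻¹ ≫ G(t)`.
-/

open CategoryTheory MonoidalCategory MonoidalClosed

/-- Unique lifting along `f` for maps out of `W ⊗ Z`, as soon as `Hom(Z, f)` is invertible. -/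
lemma existsUnique_lift_of_isIso_ihom_map {C : Type*} [Category C] [MonoidalCategory C]
    [SymmetricCategory C] [MonoidalClosed C] {X Y : C} (f : X ⟶ Y) (Z : C)
    [IsIso ((ihom Z).map f)] (W : C) (g : W ⊗ Z ⟶ Y) :
    ∃! v : W ⊗ Z ⟶ X, v ≫ f = g := by
  refine ⟨(β_ W Z).hom ≫ uncurry (curry ((β_ W Z).inv ≫ g) ≫ inv ((ihom Z).map f)), ?_, ?_⟩
  · simp [← uncurry_natural_right]
  · rintro v rfl
    rw [← Category.assoc (β_ W Z).inv, curry_natural_right]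
    simp

/-- A natural transformation `c : G ⟶ 𝟭 C` with `c_{G A} = G(c_A)` is invertible at `A` as soon
as `c_A` has a section. -/
lemma isIso_app_of_section {C : Type*} [Category C] {G : C ⥤ C} (c : G ⟶ 𝟭 C)
    (h_idem : ∀ X : C, c.app (G.obj X) = G.map (c.app X)) {A : C} (s : A ⟶ G.obj A)
    (hs : s ≫ c.app A = 𝟙 A) : IsIso (c.app A) := by
  refine ⟨s, ?_, hs⟩
  have hnat : G.map s ≫ c.app (G.obj A) = c.app A ≫ s := c.naturality s
  rw [← hnat, h_idem, ← G.map_comp, hs, G.map_id]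

/-- If `k` induces a bijection on maps out of every `G`-colocal object, then `k` is a `G`-colocal
equivalence. -/
lemma isIso_map_of_existsUnique_lift {C : Type*} [Category C] {G : C ⥤ C} (c : G ⟶ 𝟭 C)
    (h_idem : ∀ X : C, c.app (G.obj X) = G.map (c.app X))
    (h_iso : ∀ X : C, IsIso (c.app (G.obj X))) {A B : C} (k : A ⟶ B)
    (hk : ∀ Z : C, IsIso (c.app Z) → ∀ u : Z ⟶ B, ∃! v : Z ⟶ A, v ≫ k = u) :
    IsIso (G.map k) := by
  have := h_iso A
  have := h_iso B
  obtain ⟨t, ht, -⟩ := hk (G.obj B) (h_iso B) (c.app B)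
  have hnat : G.map k ≫ c.app B = c.app A ≫ k := c.naturality k
  have hkt : G.map k ≫ t = c.app A :=
    (hk (G.obj A) (h_iso A) (c.app A ≫ k)).unique
      (by rw [Category.assoc, ht, hnat]) rfl
  have hnat' : G.map (G.map k) ≫ c.app (G.obj B) = c.app (G.obj A) ≫ G.map k :=
    c.naturality (G.map k)
  refine ⟨inv (c.app (G.obj B)) ≫ G.map t, ?_, ?_⟩
  · rw [← cancel_epi (c.app (G.obj A)), ← Category.assoc, ← hnat']
    -- both sides now equal `c_{G A}`, since `G(G(k)) ≫ G(t) = G(c_A)`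
    erw [Category.assoc, IsIso.hom_inv_id_assoc, Category.comp_id, ← G.map_comp, hkt, h_idem]
  · erw [Category.assoc, ← G.map_comp, ht, ← h_idem, IsIso.inv_hom_id]

/-- For a closed colocalization functor `(G, c)`: (a) if `Z` is `G`-colocal then so is
`W ⊗ Z` for every `W`; (b) if `h` is a `G`-colocal equivalence then so is
`Hom(W, h) : Hom(W, X) ⟶ Hom(W, Y)` for every `W`. -/
theorem closed_colocalization_closure {C : Type*} [Category C] [MonoidalCategory C]
    [SymmetricCategory C] [MonoidalClosed C]
    (G : C ⥤ C) (c : G ⟶ 𝟭 C)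
    (h_idem : ∀ X : C, c.app (G.obj X) = G.map (c.app X))
    (h_iso : ∀ X : C, IsIso (c.app (G.obj X)))
    (h_closed : ∀ {X Y : C} (f : X ⟶ Y), IsIso (G.map f) →
      ∀ Z : C, IsIso (c.app Z) → IsIso ((ihom Z).map f)) :
    (∀ (Z : C), IsIso (c.app Z) → ∀ W : C, IsIso (c.app (W ⊗ Z))) ∧
      (∀ {X Y : C} (h : X ⟶ Y), IsIso (G.map h) → ∀ W : C,
        IsIso (G.map ((ihom W).map h))) := by
  have lift {X Y : C} (f : X ⟶ Y) (hf : IsIso (G.map f)) (Z : C) (hZ : IsIso (c.app Z)) (W : C)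
      (g : W ⊗ Z ⟶ Y) : ∃! v : W ⊗ Z ⟶ X, v ≫ f = g :=
    have := h_closed f hf Z hZ
    existsUnique_lift_of_isIso_ihom_map f Z W g
  refine ⟨fun Z hZ W => ?_, fun {X Y} h hh W => ?_⟩
  · have hc : IsIso (G.map (c.app (W ⊗ Z))) := h_idem (W ⊗ Z) ▸ h_iso (W ⊗ Z)
    obtain ⟨s, hs, -⟩ := lift (c.app (W ⊗ Z)) hc Z hZ W (𝟙 _)
    exact isIso_app_of_section c h_idem s hs
  · refine isIso_map_of_existsUnique_lift c h_idem h_iso _ fun Z hZ u => ?_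
    obtain ⟨v, hv, huniq⟩ := lift h hh Z hZ W (uncurry u)
    refine ⟨curry v, ?_, fun w hw => ?_⟩
    · change curry v ≫ (ihom W).map h = u
      rw [← curry_natural_right, hv, curry_uncurry]
    · rw [← huniq (uncurry w) (by rw [← hw]; exact (uncurry_natural_right _ _).symm),
        curry_uncurry]
end

section
/- Let A be a subring of the field ℚ of rational numbers. Then A is a solid ring: the multiplication map A ⊗_ℤ A → A, determined by a ⊗ b ↦ a·b, is bijective (an isomorphism of rings). -/
open scoped TensorProduct

/-!
The map `a ↦ a ⊗ 1` is a right inverse of multiplication, so it suffices that it is also a left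
inverse, i.e. that `a ⊗ b = ab ⊗ 1` for `a b : A`. Write `b = p / q` in lowest terms. By Bézout,
`u p + v q = 1` for integers `u`, `v`, so `1 / q = u b + v` lies in `A`. Hence `a` is divisible
by `q` in `A` and
`a ⊗ b = q (a / q) ⊗ b = (a / q) ⊗ q b = (a / q) ⊗ p = ab ⊗ 1`.
-/

/-- A subring of `ℚ` contains the inverse of the denominator of each of its elements. -/
theorem exists_den_mul_eq_one (A : Subring ℚ) (b : A) :
    ∃ c : A, ((b : ℚ).den : ℤ) • c = 1 := by
  have h : IsCoprime (b : ℚ).num ((b : ℚ).den : ℤ) :=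
    Int.isCoprime_iff_gcd_eq_one.mpr (b : ℚ).reduced
  obtain ⟨u, v, huv⟩ := h
  refine ⟨u • b + v • 1, Subtype.ext ?_⟩
  have hb : ((b : ℚ).den : ℚ) * b = (b : ℚ).num := Rat.den_mul_eq_num _
  have huv' : (u : ℚ) * (b : ℚ).num + v * (b : ℚ).den = 1 := by exact_mod_cast huv
  push_cast [zsmul_eq_mul]
  linear_combination (u : ℚ) * hb + huv'

theorem tmul_eq_mul_tmul_one (A : Subring ℚ) (a b : A) :
    a ⊗ₜ[ℤ] b = (a * b) ⊗ₜ[ℤ] (1 : A) := by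
  obtain ⟨c, hc⟩ := exists_den_mul_eq_one A b
  have hb : ((b : ℚ).den : ℤ) • b = (b : ℚ).num • (1 : A) := by
    apply Subtype.ext
    push_cast [zsmul_eq_mul]
    rw [mul_one]
    exact Rat.den_mul_eq_num _
  have ha : ((b : ℚ).den : ℤ) • (a * c) = a := by
    rw [← mul_smul_comm, hc, mul_one]
  have hab : (b : ℚ).num • (a * c) = a * b := by
    calc (b : ℚ).num • (a * c) = (a * c) * ((b : ℚ).num • (1 : A)) := by
          rw [mul_smul_comm, mul_one]
      _ = (((b : ℚ).den : ℤ) • (a * c)) * b := by rw [← hb, mul_smul_comm, smul_mul_assoc]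
      _ = a * b := by rw [ha]
  calc a ⊗ₜ[ℤ] b = (((b : ℚ).den : ℤ) • (a * c)) ⊗ₜ[ℤ] b := by rw [ha]
    _ = (a * c) ⊗ₜ[ℤ] ((b : ℚ).num • (1 : A)) := by rw [TensorProduct.smul_tmul, hb]
    _ = (a * b) ⊗ₜ[ℤ] (1 : A) := by rw [← TensorProduct.smul_tmul, hab]

/-- Every subring `A` of the rationals is a solid ring: the multiplication map
`A ⊗_ℤ A → A`, determined by `a ⊗ b ↦ a * b`, is bijective. -/
theorem subring_rat_solid (A : Subring ℚ) :
    Function.Bijective (LinearMap.mul' ℤ A) := by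
  refine Function.bijective_iff_has_inverse.mpr ⟨fun a => a ⊗ₜ[ℤ] 1, fun t => ?_, fun a => ?_⟩
  · induction t with
    | zero => simp
    | tmul a b => rw [LinearMap.mul'_apply, tmul_eq_mul_tmul_one A a b]
    | add x y hx hy =>
      simp only at hx hy ⊢
      rw [map_add, TensorProduct.add_tmul, hx, hy]
  · rw [LinearMap.mul'_apply, mul_one]
end
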